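/- arXiv:2407.12719 — 2 statements merged into one kernel-verified Lean document; each statement's English description precedes it below -/
import Mathlib

section
/- For every real number L with 0 ≤ L ≤ 2/π, there exists an infinite binary word w such that the limit lim_{n→∞} (d_n(w)/n!)^{1/n} exists and equals L. -/
open Filter

/-- `dCount w n` is the number of permutations `π` of `{1,…,n}` (modeled as `Fin n`,
zero-based) such that for every `1 ≤ i ≤ n-1`, `π(i) > π(i+1)` iff the `i`-th letter of the
infinite binary word `w` (1-indexed, `w 0` is irrelevant) equals `1` (i.e. `true`). -/
noncomputable def dCount (w : ℕ → Bool) (n : ℕ) : ℕ :=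
  Nat.card {π : Equiv.Perm (Fin n) //
    ∀ i : ℕ, ∀ h : i + 1 < n,
      (π ⟨i + 1, h⟩ < π ⟨i, Nat.lt_of_succ_lt h⟩ ↔ w (i + 1) = true)}

/-!
Among `n` independent uniform samples from `[0, 1]`, the density of the last one on the event that
the samples have descent word `w` is obtained by integrating from `0` (letter `false`) or up to `1`
(letter `true`), so `descentProb w n = dCount w n / n!` is the integral of such a density. Appending
`false` `k` times divides the probability by at least `k!`, faster than any geometric rate.
Alternating the letters costs a factor of only `2 / π` per letter: the weights `sin (π x / 2)` and
`cos (π x / 2)` are exchanged, up to the factor `2 / π`, by the adjoints of the two integrations.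
So one builds `w` greedily, appending `false` while the probability is at least `L ^ n` and
alternating below that threshold. The probability then stays above `L ^ n / n`, because the weighted
integral decays no faster than `L ^ n` while alternating and is at least `2 / π` times the
probability, up to a factor `n`, right after a threshold crossing. It stays below a multiple of
`a ^ n` for every `a > L`, because each excursion above the threshold is a run of `false`.
-/

section BernsteinForm

open Polynomial

variable {R : Type*} [CommRing R]

/-- The polynomial with coefficients `c 0, …, c n` in the Bernstein basis of degree `n`. -/
noncomputable def bernsteinForm (n : ℕ) (c : ℕ → R) : R[X] :=
  ∑ j ∈ Finset.range (n + 1), C (c j) * bernsteinPolynomial R n j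

lemma bernsteinForm_congr {n : ℕ} {c d : ℕ → R} (h : ∀ j ≤ n, c j = d j) :
    bernsteinForm n c = bernsteinForm n d :=
  Finset.sum_congr rfl fun j hj => by rw [h j (Finset.mem_range_succ_iff.1 hj)]

lemma bernsteinForm_neg (n : ℕ) (c : ℕ → R) :
    bernsteinForm n (fun j => -c j) = -bernsteinForm n c := by
  simp [bernsteinForm]

lemma eval_zero_bernsteinForm (n : ℕ) (c : ℕ → R) : (bernsteinForm n c).eval 0 = c 0 := by
  simp [bernsteinForm, eval_finsetSum, bernsteinPolynomial.eval_at_0]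

lemma eval_one_bernsteinForm (n : ℕ) (c : ℕ → R) : (bernsteinForm n c).eval 1 = c n := by
  simp [bernsteinForm, eval_finsetSum, bernsteinPolynomial.eval_at_1]

lemma derivative_bernsteinForm_succ (n : ℕ) (c : ℕ → R) :
    derivative (bernsteinForm (n + 1) c) =
      (n + 1 : R[X]) * bernsteinForm n (fun j => c (j + 1) - c j) := by
  have hshift : ∑ j ∈ Finset.range (n + 1), C (c j) * bernsteinPolynomial R n j =
      ∑ j ∈ Finset.range (n + 1), C (c (j + 1)) * bernsteinPolynomial R n (j + 1) +
        C (c 0) * bernsteinPolynomial R n 0 := by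
    rw [← Finset.sum_range_succ' (fun j => C (c j) * bernsteinPolynomial R n j),
      Finset.sum_range_succ _ (n + 1), bernsteinPolynomial.eq_zero_of_lt R n.lt_succ_self, mul_zero,
      add_zero]
  simp only [bernsteinForm, C_sub, sub_mul, Finset.sum_sub_distrib, hshift]
  simp only [Finset.sum_range_succ' _ (n + 1), derivative_add, derivative_sum, derivative_C_mul,
    bernsteinPolynomial.derivative_succ, bernsteinPolynomial.derivative_zero, Nat.add_sub_cancel,
    Nat.cast_add, Nat.cast_one, mul_add, mul_sub, Finset.mul_sum, Finset.sum_sub_distrib,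
    mul_left_comm (C _)]
  ring

lemma integral_eval_bernsteinForm {n : ℕ} {c d : ℕ → ℝ} (h : ∀ j ≤ n, d (j + 1) - d j = c j)
    (a b : ℝ) :
    ∫ x in a..b, (bernsteinForm n c).eval x =
      ((bernsteinForm (n + 1) d).eval b - (bernsteinForm (n + 1) d).eval a) / (n + 1) := by
  have hderiv (x : ℝ) : (derivative (bernsteinForm (n + 1) d)).eval x =
      (n + 1) * (bernsteinForm n c).eval x := by
    rw [derivative_bernsteinForm_succ, bernsteinForm_congr h]
    simp
  rw [eq_div_iff (by positivity), mul_comm, ← intervalIntegral.integral_const_mul]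
  simp_rw [← hderiv]
  exact intervalIntegral.integral_eq_sub_of_hasDerivAt (fun x _ => Polynomial.hasDerivAt _ x)
    ((Polynomial.continuous _).intervalIntegrable a b)

lemma integral_eval_bernsteinForm_zero_one (n : ℕ) (c : ℕ → ℝ) :
    ∫ x in 0..1, (bernsteinForm n c).eval x = (∑ j ∈ Finset.range (n + 1), c j) / (n + 1) := by
  rw [integral_eval_bernsteinForm (d := fun j => ∑ i ∈ Finset.range j, c i)
    fun j _ => Finset.sum_range_succ_sub_sum c]
  simp [eval_zero_bernsteinForm, eval_one_bernsteinForm]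

end BernsteinForm

section DescentWord

open Equiv

/-- The permutation of `Fin (n + 1)` with last value `j` whose remaining values are ordered as
those of `π`. -/
def snocPerm {n : ℕ} (j : Fin (n + 1)) (π : Perm (Fin n)) : Perm (Fin (n + 1)) :=
  (finSuccEquiv' (Fin.last n)).trans ((optionCongr π).trans (finSuccEquiv' j).symm)

lemma snocPerm_last {n : ℕ} (j : Fin (n + 1)) (π : Perm (Fin n)) :
    snocPerm j π (Fin.last n) = j := by
  simp [snocPerm]

lemma snocPerm_castSucc {n : ℕ} (j : Fin (n + 1)) (π : Perm (Fin n)) (i : Fin n) :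
    snocPerm j π i.castSucc = j.succAbove (π i) := by
  rw [← Fin.succAbove_last_apply]
  simp only [snocPerm, Equiv.trans_apply, finSuccEquiv'_succAbove, optionCongr_apply,
    Option.map_some, finSuccEquiv'_symm_some]

lemma snocPerm_bijective (n : ℕ) :
    Function.Bijective fun p : Fin (n + 1) × Perm (Fin n) => snocPerm p.1 p.2 := by
  refine (Fintype.bijective_iff_injective_and_card _).2 ⟨?_, ?_⟩
  · rintro ⟨j, π⟩ ⟨k, ρ⟩ h
    obtain rfl : j = k := by simpa [snocPerm_last] using congr($h (Fin.last n))
    refine Prod.ext rfl (Equiv.ext fun i => ?_)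
    simpa [snocPerm_castSucc] using congr($h i.castSucc)
  · simp [Fintype.card_perm, Nat.factorial_succ]

lemma snocPerm_injective {n : ℕ} (j : Fin (n + 1)) : Function.Injective (snocPerm j) :=
  fun π ρ h => congrArg Prod.snd ((snocPerm_bijective n).1 (a₁ := (j, π)) (a₂ := (j, ρ)) h)

/-- The descents of `π` are exactly the positions where `w` is `true`, positions being counted
from `1` as in `dCount`. -/
def HasDescentWord (w : ℕ → Bool) {n : ℕ} (π : Perm (Fin n)) : Prop :=
  ∀ i : ℕ, ∀ h : i + 1 < n,
    (π ⟨i + 1, h⟩ < π ⟨i, Nat.lt_of_succ_lt h⟩ ↔ w (i + 1) = true)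

lemma HasDescentWord.congr {u v : ℕ → Bool} {n : ℕ} (h : ∀ i < n, u i = v i)
    {π : Perm (Fin n)} (hπ : HasDescentWord u π) : HasDescentWord v π :=
  fun i hi => h (i + 1) hi ▸ hπ i hi

lemma hasDescentWord_snocPerm (w : ℕ → Bool) {n : ℕ} (j : Fin (n + 2)) (π : Perm (Fin (n + 1))) :
    HasDescentWord w (snocPerm j π) ↔
      HasDescentWord w π ∧ (j ≤ (π (Fin.last n)).castSucc ↔ w (n + 1) = true) := by
  have hlast (h h') : snocPerm j π ⟨n + 1, h⟩ < snocPerm j π ⟨n, h'⟩ ↔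
      j ≤ (π (Fin.last n)).castSucc := by
    rw [← Fin.lt_succAbove_iff_le_castSucc, ← snocPerm_castSucc]
    nth_rw 3 [← snocPerm_last j π]
    rfl
  have hinit (i : ℕ) (h h' h₁ h₁') : snocPerm j π ⟨i + 1, h⟩ < snocPerm j π ⟨i, h'⟩ ↔
      π ⟨i + 1, h₁⟩ < π ⟨i, h₁'⟩ := by
    rw [← (Fin.strictMono_succAbove j).lt_iff_lt, ← snocPerm_castSucc, ← snocPerm_castSucc]
    rfl
  constructor
  · exact fun H => ⟨fun i h => (hinit i _ _ _ _).symm.trans (H i (by omega)),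
      (hlast _ _).symm.trans (H n (by omega))⟩
  · rintro ⟨H, H'⟩ i h
    obtain hi | rfl : i < n ∨ i = n := by omega
    · exact (hinit i _ _ _ _).trans (H i (by omega))
    · exact (hlast _ _).trans H'

lemma dependsOn_dCount (n : ℕ) : DependsOn (fun w => dCount w n) (Set.Iio n) :=
  fun _ _ h => Nat.card_congr <| subtypeEquivRight fun _ =>
    ⟨HasDescentWord.congr h, HasDescentWord.congr fun i hi => (h i hi).symm⟩

lemma dCount_le_dCount_succ (w : ℕ → Bool) (n : ℕ) : dCount w (n + 1) ≤ dCount w (n + 2) := by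
  obtain ⟨j, hj⟩ : ∃ j : Fin (n + 2), ∀ i : Fin (n + 1), j ≤ i.castSucc ↔ w (n + 1) = true := by
    cases w (n + 1) with
    | false => exact ⟨Fin.last _, fun i => by simp [Fin.castSucc_ne_last]⟩
    | true => exact ⟨0, fun i => by simp⟩
  refine Nat.card_le_card_of_injective
    (fun π : {π : Perm (Fin (n + 1)) // HasDescentWord w π} =>
      (⟨snocPerm j π.1, (hasDescentWord_snocPerm w j π.1).2 ⟨π.2, hj _⟩⟩ :
        {σ : Perm (Fin (n + 2)) // HasDescentWord w σ})) fun π ρ h => ?_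
  exact Subtype.ext (snocPerm_injective j (congrArg Subtype.val h))

/-- The number of permutations of `Fin (n + 1)` with descent word `w` and last value `j`. -/
noncomputable def endCount (w : ℕ → Bool) (n j : ℕ) : ℕ :=
  Nat.card {π : Perm (Fin (n + 1)) // HasDescentWord w π ∧ (π (Fin.last n) : ℕ) = j}

lemma natCard_subtype_eq_sum_range {α : Type*} [Finite α] (P : α → Prop) {m : ℕ} (f : α → Fin m) :
    Nat.card {x // P x} = ∑ j ∈ Finset.range m, Nat.card {x // P x ∧ (f x : ℕ) = j} := by
  rw [← Fin.sum_univ_eq_sum_range (fun j => Nat.card {x // P x ∧ (f x : ℕ) = j}),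
    Nat.card_congr (sigmaFiberEquiv fun x : {x // P x} => f x).symm, Nat.card_sigma]
  refine Finset.sum_congr rfl fun j _ => ?_
  rw [Nat.card_congr (subtypeSubtypeEquivSubtypeInter P fun x => f x = j)]
  simp only [Fin.ext_iff]

lemma dCount_succ (w : ℕ → Bool) (n : ℕ) :
    dCount w (n + 1) = ∑ j ∈ Finset.range (n + 1), endCount w n j :=
  natCard_subtype_eq_sum_range (HasDescentWord w) fun π => π (Fin.last n)

lemma endCount_zero_zero (w : ℕ → Bool) : endCount w 0 0 = 1 := by
  have h (π : Perm (Fin 1)) : HasDescentWord w π ∧ (π (Fin.last 0) : ℕ) = 0 :=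
    ⟨fun i hi => absurd hi (by omega), by omega⟩
  simp [endCount, h]

lemma endCount_succ_eq_card (w : ℕ → Bool) {n j : ℕ} (hj : j ≤ n + 1) :
    endCount w (n + 1) j = Nat.card {π : Perm (Fin (n + 1)) //
      HasDescentWord w π ∧ (j ≤ (π (Fin.last n) : ℕ) ↔ w (n + 1) = true)} := by
  obtain ⟨j, rfl⟩ : ∃ k : Fin (n + 2), (k : ℕ) = j := ⟨⟨j, by omega⟩, rfl⟩
  symm
  refine Nat.card_eq_of_bijective (fun π => ⟨snocPerm j π.1,
    (hasDescentWord_snocPerm w j π.1).2 π.2, by rw [snocPerm_last]⟩) ⟨fun π ρ h => ?_, ?_⟩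
  · exact Subtype.ext (snocPerm_injective j (congrArg Subtype.val h))
  · rintro ⟨σ, hσ, hlast⟩
    obtain ⟨⟨k, π⟩, rfl⟩ := (snocPerm_bijective (n + 1)).2 σ
    obtain rfl : k = j := by simpa [snocPerm_last, Fin.val_inj] using hlast
    exact ⟨⟨π, (hasDescentWord_snocPerm w k π).1 hσ⟩, rfl⟩

lemma endCount_succ (w : ℕ → Bool) {n j : ℕ} (hj : j ≤ n + 1) :
    endCount w (n + 1) j =
      ∑ i ∈ Finset.range (n + 1) with (j ≤ i ↔ w (n + 1) = true), endCount w n i := by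
  rw [endCount_succ_eq_card w hj, natCard_subtype_eq_sum_range _ fun π => π (Fin.last n),
    Finset.sum_filter]
  refine Finset.sum_congr rfl fun i _ => ?_
  split_ifs with hi
  · exact Nat.card_congr (subtypeEquivRight fun π => by grind)
  · have : IsEmpty {π : Perm (Fin (n + 1)) // (HasDescentWord w π ∧
        (j ≤ (π (Fin.last n) : ℕ) ↔ w (n + 1) = true)) ∧ (π (Fin.last n) : ℕ) = i} :=
      ⟨fun ⟨_, ⟨_, h⟩, h'⟩ => hi (h' ▸ h)⟩
    exact Nat.card_of_isEmpty

lemma endCount_succ_of_true {w : ℕ → Bool} {n j : ℕ} (h : w (n + 1) = true) (hj : j ≤ n + 1) :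
    endCount w (n + 1) j = ∑ i ∈ Finset.Ico j (n + 1), endCount w n i := by
  rw [endCount_succ w hj]
  refine Finset.sum_congr ?_ fun _ _ => rfl
  ext i
  simp [h, and_comm]

lemma endCount_succ_of_false {w : ℕ → Bool} {n j : ℕ} (h : w (n + 1) = false) (hj : j ≤ n + 1) :
    endCount w (n + 1) j = ∑ i ∈ Finset.range j, endCount w n i := by
  rw [endCount_succ w hj]
  refine Finset.sum_congr ?_ fun _ _ => rfl
  ext i
  simp only [h, Finset.mem_filter, Finset.mem_range, Bool.false_eq_true, iff_false, not_le]
  omega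

end DescentWord

section EndDensity

variable {w : ℕ → Bool} {n : ℕ}

/-- The density of the last of `n + 1` independent uniform samples from `[0, 1]`, restricted to the
event that the samples have descent word `w`. -/
noncomputable def endDensity (w : ℕ → Bool) : ℕ → ℝ → ℝ
  | 0, _ => 1
  | n + 1, x => if w (n + 1) then ∫ y in x..1, endDensity w n y else ∫ y in 0..x, endDensity w n y

lemma endDensity_succ_of_true (h : w (n + 1) = true) (x : ℝ) :
    endDensity w (n + 1) x = ∫ y in x..1, endDensity w n y :=
  if_pos h

lemma endDensity_succ_of_false (h : w (n + 1) = false) (x : ℝ) :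
    endDensity w (n + 1) x = ∫ y in 0..x, endDensity w n y :=
  if_neg (by simp [h])

-- Given that the last of `n + 1` samples has rank `j` (from `0`), its density is
-- `(n + 1) * bernsteinPolynomial ℝ n j`, and this event has probability `endCount / (n + 1)!`.
lemma endDensity_eq_eval_bernsteinForm (w : ℕ → Bool) (n : ℕ) (x : ℝ) :
    endDensity w n x = (bernsteinForm n fun j => (endCount w n j : ℝ)).eval x / n.factorial := by
  induction n generalizing x with
  | zero => simp [endDensity, bernsteinForm, endCount_zero_zero, bernsteinPolynomial]
  | succ n ih =>
    cases h : w (n + 1) with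
    | false =>
      have hdiff (j : ℕ) (hj : j ≤ n) :
          (endCount w (n + 1) (j + 1) : ℝ) - endCount w (n + 1) j = endCount w n j := by
        rw [endCount_succ_of_false h (by omega), endCount_succ_of_false h (by omega)]
        push_cast
        exact Finset.sum_range_succ_sub_sum _
      simp_rw [endDensity_succ_of_false h, ih, intervalIntegral.integral_div,
        integral_eval_bernsteinForm (d := fun j => (endCount w (n + 1) j : ℝ)) hdiff,
        eval_zero_bernsteinForm, endCount_succ_of_false h (Nat.zero_le _), Nat.factorial_succ]
      simp [div_div]
    | true =>
      have hdiff (j : ℕ) (hj : j ≤ n) :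
          -(endCount w (n + 1) (j + 1) : ℝ) - -endCount w (n + 1) j = endCount w n j := by
        rw [endCount_succ_of_true h (by omega), endCount_succ_of_true (j := j) h (by omega),
          Finset.sum_eq_sum_Ico_succ_bot (a := j) (by omega)]
        push_cast
        ring
      simp_rw [endDensity_succ_of_true h, ih, intervalIntegral.integral_div,
        integral_eval_bernsteinForm (d := fun j => -(endCount w (n + 1) j : ℝ)) hdiff,
        bernsteinForm_neg, Polynomial.eval_neg, eval_one_bernsteinForm,
        endCount_succ_of_true h le_rfl, Nat.factorial_succ]
      simp [div_div]

lemma continuous_endDensity (w : ℕ → Bool) (n : ℕ) : Continuous (endDensity w n) := by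
  simp_rw [funext (endDensity_eq_eval_bernsteinForm w n)]
  fun_prop

lemma intervalIntegrable_endDensity (w : ℕ → Bool) (n : ℕ) (a b : ℝ) :
    IntervalIntegrable (endDensity w n) MeasureTheory.volume a b :=
  (continuous_endDensity w n).intervalIntegrable a b

lemma hasDerivAt_endDensity_of_false (h : w (n + 1) = false) (x : ℝ) :
    HasDerivAt (endDensity w (n + 1)) (endDensity w n x) x := by
  rw [funext (endDensity_succ_of_false h)]
  exact ((continuous_endDensity w n).integral_hasStrictDerivAt 0 x).hasDerivAt

lemma hasDerivAt_endDensity_of_true (h : w (n + 1) = true) (x : ℝ) :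
    HasDerivAt (endDensity w (n + 1)) (-endDensity w n x) x := by
  simp_rw [funext (endDensity_succ_of_true h), intervalIntegral.integral_symm 1]
  exact ((continuous_endDensity w n).integral_hasStrictDerivAt 1 x).hasDerivAt.neg

lemma endDensity_nonneg (w : ℕ → Bool) (n : ℕ) {x : ℝ} (hx : x ∈ Set.Icc 0 1) :
    0 ≤ endDensity w n x := by
  induction n generalizing x with
  | zero => exact zero_le_one
  | succ n ih =>
    cases h : w (n + 1) with
    | false =>
      rw [endDensity_succ_of_false h]
      exact intervalIntegral.integral_nonneg hx.1 fun y hy => ih ⟨hy.1, hy.2.trans hx.2⟩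
    | true =>
      rw [endDensity_succ_of_true h]
      exact intervalIntegral.integral_nonneg hx.2 fun y hy => ih ⟨hx.1.trans hy.1, hy.2⟩

lemma endDensity_succ_le_integral (w : ℕ → Bool) (n : ℕ) {x : ℝ} (hx : x ∈ Set.Icc 0 1) :
    endDensity w (n + 1) x ≤ ∫ y in 0..1, endDensity w n y := by
  rw [← intervalIntegral.integral_add_adjacent_intervals (b := x)
    (intervalIntegrable_endDensity w n _ _) (intervalIntegrable_endDensity w n _ _)]
  cases h : w (n + 1) with
  | false =>
    rw [endDensity_succ_of_false h, le_add_iff_nonneg_right]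
    exact intervalIntegral.integral_nonneg hx.2 fun y hy =>
      endDensity_nonneg w n ⟨hx.1.trans hy.1, hy.2⟩
  | true =>
    rw [endDensity_succ_of_true h, le_add_iff_nonneg_left]
    exact intervalIntegral.integral_nonneg hx.1 fun y hy =>
      endDensity_nonneg w n ⟨hy.1, hy.2.trans hx.2⟩

lemma integral_endDensity_succ_mul_deriv_of_false (h : w (n + 1) = false) {g g' : ℝ → ℝ}
    (hg : ∀ x, HasDerivAt g (g' x) x) (hg' : Continuous g') (hg1 : g 1 = 0) :
    ∫ x in 0..1, endDensity w (n + 1) x * g' x = -∫ x in 0..1, endDensity w n x * g x := by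
  rw [intervalIntegral.integral_mul_deriv_eq_deriv_mul
    (fun x _ => hasDerivAt_endDensity_of_false h x) (fun x _ => hg x)
    (intervalIntegrable_endDensity w n _ _) (hg'.intervalIntegrable _ _),
    hg1, endDensity_succ_of_false h 0, intervalIntegral.integral_same]
  ring

lemma integral_endDensity_succ_mul_deriv_of_true (h : w (n + 1) = true) {g g' : ℝ → ℝ}
    (hg : ∀ x, HasDerivAt g (g' x) x) (hg' : Continuous g') (hg0 : g 0 = 0) :
    ∫ x in 0..1, endDensity w (n + 1) x * g' x = ∫ x in 0..1, endDensity w n x * g x := by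
  rw [intervalIntegral.integral_mul_deriv_eq_deriv_mul
    (fun x _ => hasDerivAt_endDensity_of_true h x) (fun x _ => hg x)
    (intervalIntegrable_endDensity w n _ _).neg (hg'.intervalIntegrable _ _),
    hg0, endDensity_succ_of_true h 1, intervalIntegral.integral_same]
  simp

end EndDensity

section DescentProb

/-- The probability that a uniformly random permutation of `Fin n` has descent word `w`. -/
noncomputable def descentProb (w : ℕ → Bool) (n : ℕ) : ℝ :=
  dCount w n / n.factorial

lemma descentProb_zero (w : ℕ → Bool) : descentProb w 0 = 1 := by
  simp [descentProb, dCount]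

lemma dependsOn_descentProb (n : ℕ) : DependsOn (fun w => descentProb w n) (Set.Iio n) :=
  fun _ _ h => congrArg (fun d : ℕ => (d : ℝ) / n.factorial) (dependsOn_dCount n h)

lemma integral_endDensity (w : ℕ → Bool) (n : ℕ) :
    ∫ x in 0..1, endDensity w n x = descentProb w (n + 1) := by
  simp_rw [endDensity_eq_eval_bernsteinForm, intervalIntegral.integral_div,
    integral_eval_bernsteinForm_zero_one, descentProb, dCount_succ, Nat.factorial_succ]
  push_cast
  rw [div_div]

lemma descentProb_div_le_descentProb_succ (w : ℕ → Bool) (n : ℕ) :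
    descentProb w (n + 1) / (n + 2) ≤ descentProb w (n + 2) := by
  have hfactorial : ((n + 2).factorial : ℝ) = (n + 1).factorial * (n + 2) := by
    rw [Nat.factorial_succ]
    push_cast
    ring
  rw [descentProb, descentProb, div_div, hfactorial]
  gcongr
  exact dCount_le_dCount_succ w n

lemma endDensity_le_descentProb (w : ℕ → Bool) (n : ℕ) {x : ℝ} (hx : x ∈ Set.Icc 0 1) :
    endDensity w n x ≤ descentProb w n := by
  cases n with
  | zero => exact (descentProb_zero w).ge
  | succ n => exact integral_endDensity w n ▸ endDensity_succ_le_integral w n hx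

lemma descentProb_succ_le (w : ℕ → Bool) (n : ℕ) : descentProb w (n + 1) ≤ descentProb w n := by
  rw [← integral_endDensity]
  calc ∫ x in 0..1, endDensity w n x ≤ ∫ _ in (0 : ℝ)..1, descentProb w n :=
        intervalIntegral.integral_mono_on zero_le_one (intervalIntegrable_endDensity w n _ _)
          intervalIntegrable_const fun x hx => endDensity_le_descentProb w n hx
    _ = descentProb w n := by simp

lemma integral_pow_div_factorial (c x : ℝ) (k : ℕ) :
    ∫ y in 0..x, c * (y ^ k / k.factorial) = c * (x ^ (k + 1) / (k + 1).factorial) := by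
  rw [intervalIntegral.integral_const_mul, intervalIntegral.integral_div, integral_pow,
    Nat.factorial_succ, zero_pow k.succ_ne_zero, sub_zero, div_div]
  push_cast
  rfl

lemma endDensity_le_of_run {w : ℕ → Bool} {m k : ℕ}
    (hw : ∀ i, m < i → i ≤ m + k → w i = false) {x : ℝ} (hx : x ∈ Set.Icc 0 1) :
    endDensity w (m + k) x ≤ descentProb w m * (x ^ k / k.factorial) := by
  induction k generalizing x with
  | zero => simpa using endDensity_le_descentProb w m hx
  | succ k ih =>
    rw [← add_assoc, endDensity_succ_of_false (hw _ (by omega) (by omega)),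
      ← integral_pow_div_factorial]
    refine intervalIntegral.integral_mono_on hx.1 (intervalIntegrable_endDensity w _ _ _)
      ((by fun_prop : Continuous _).intervalIntegrable _ _) fun y hy => ?_
    exact ih (fun i hi hi' => hw i hi (by omega)) ⟨hy.1, hy.2.trans hx.2⟩

lemma descentProb_le_of_run {w : ℕ → Bool} {m k : ℕ}
    (hw : ∀ i, m < i → i < m + k → w i = false) :
    descentProb w (m + k) ≤ descentProb w m / k.factorial := by
  cases k with
  | zero => simp
  | succ k =>
    calc descentProb w (m + k + 1) = ∫ x in 0..1, endDensity w (m + k) x :=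
          (integral_endDensity w (m + k)).symm
      _ ≤ ∫ x in 0..1, descentProb w m * (x ^ k / k.factorial) :=
          intervalIntegral.integral_mono_on zero_le_one (intervalIntegrable_endDensity w _ _ _)
            ((by fun_prop : Continuous _).intervalIntegrable _ _)
            fun x hx => endDensity_le_of_run (fun i hi hi' => hw i hi (by omega)) hx
      _ = descentProb w m / (k + 1).factorial := by
          rw [integral_pow_div_factorial, one_pow, mul_one_div]

end DescentProb

section AlternatingMoment

open scoped Real

/-- The weight paired with end densities of words with last letter `a`: the adjoint of the integral
operator by which `endDensity` appends `a` maps it to `2 / π` times the weight for `!a`. -/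
noncomputable def alternatingWeight (a : Bool) (x : ℝ) : ℝ :=
  if a then Real.cos (π / 2 * x) else Real.sin (π / 2 * x)

lemma alternatingWeight_le_one (a : Bool) (x : ℝ) : alternatingWeight a x ≤ 1 := by
  cases a
  · exact Real.sin_le_one _
  · exact Real.cos_le_one _

lemma continuous_alternatingWeight (a : Bool) : Continuous (alternatingWeight a) := by
  cases a
  · exact (by fun_prop : Continuous fun x => Real.sin (π / 2 * x))
  · exact (by fun_prop : Continuous fun x => Real.cos (π / 2 * x))

lemma le_alternatingWeight_false {x : ℝ} (hx : x ∈ Set.Icc 0 1) : x ≤ alternatingWeight false x :=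
  Real.le_sin_mul hx.1 hx.2

lemma one_sub_le_alternatingWeight_true {x : ℝ} (hx : x ∈ Set.Icc 0 1) :
    1 - x ≤ alternatingWeight true x := by
  have h := Real.one_sub_mul_le_cos (x := π / 2 * x) (by have := hx.1; positivity)
    (mul_le_of_le_one_right (by positivity) hx.2)
  rwa [← mul_assoc, div_mul_div_cancel₀ Real.pi_ne_zero, div_self two_ne_zero, one_mul] at h

lemma hasDerivAt_const_mul_alternatingWeight_true (x : ℝ) :
    HasDerivAt (fun x => 2 / π * alternatingWeight true x) (-alternatingWeight false x) x := by
  have h := ((hasDerivAt_id x).const_mul (π / 2)).cos.const_mul (2 / π)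
  refine h.congr_deriv ?_
  simp only [alternatingWeight, id, Bool.false_eq_true, if_false]
  field_simp

lemma hasDerivAt_const_mul_alternatingWeight_false (x : ℝ) :
    HasDerivAt (fun x => 2 / π * alternatingWeight false x) (alternatingWeight true x) x := by
  have h := ((hasDerivAt_id x).const_mul (π / 2)).sin.const_mul (2 / π)
  refine h.congr_deriv ?_
  simp only [alternatingWeight, id, if_true]
  field_simp

lemma alternatingWeight_false_zero : alternatingWeight false 0 = 0 := by
  simp [alternatingWeight]

lemma alternatingWeight_true_zero : alternatingWeight true 0 = 1 := by
  simp [alternatingWeight]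

lemma alternatingWeight_true_one : alternatingWeight true 1 = 0 := by
  simp [alternatingWeight]

/-- The integral of the end density against the `alternatingWeight` of its last letter. -/
noncomputable def alternatingMoment (w : ℕ → Bool) (n : ℕ) : ℝ :=
  ∫ x in 0..1, endDensity w n x * alternatingWeight (w n) x

lemma alternatingMoment_zero {w : ℕ → Bool} (h : w 0 = false) : alternatingMoment w 0 = 2 / π := by
  have hintegral := intervalIntegral.integral_eq_sub_of_hasDerivAt (a := 0) (b := 1)
    (fun x _ => hasDerivAt_const_mul_alternatingWeight_true x)
    ((continuous_alternatingWeight false).neg.intervalIntegrable _ _)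
  rw [intervalIntegral.integral_neg, alternatingWeight_true_one,
    alternatingWeight_true_zero] at hintegral
  simp only [alternatingMoment, h, endDensity, one_mul]
  linarith

lemma alternatingMoment_le (w : ℕ → Bool) (n : ℕ) :
    alternatingMoment w n ≤ descentProb w (n + 1) := by
  rw [← integral_endDensity]
  exact intervalIntegral.integral_mono_on zero_le_one
    (((continuous_endDensity w n).mul (continuous_alternatingWeight _)).intervalIntegrable _ _)
    (intervalIntegrable_endDensity w n _ _)
    fun x hx => mul_le_of_le_one_right (endDensity_nonneg w n hx) (alternatingWeight_le_one _ x)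

lemma alternatingMoment_succ (w : ℕ → Bool) (n : ℕ) :
    alternatingMoment w (n + 1) =
      2 / π * ∫ x in 0..1, endDensity w n x * alternatingWeight (!w (n + 1)) x := by
  rw [← intervalIntegral.integral_const_mul, alternatingMoment]
  simp_rw [mul_left_comm (2 / π)]
  cases h : w (n + 1) with
  | false =>
    rw [Bool.not_false, ← neg_inj, ← integral_endDensity_succ_mul_deriv_of_false h
      hasDerivAt_const_mul_alternatingWeight_true (continuous_alternatingWeight false).neg
      (by rw [alternatingWeight_true_one, mul_zero]), ← intervalIntegral.integral_neg]
    simp_rw [mul_neg]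
  | true =>
    exact integral_endDensity_succ_mul_deriv_of_true h
      hasDerivAt_const_mul_alternatingWeight_false (continuous_alternatingWeight true)
      (by rw [Bool.not_true, alternatingWeight_false_zero, mul_zero])

lemma alternatingMoment_succ_of_eq_not {w : ℕ → Bool} {n : ℕ} (h : w (n + 1) = !w n) :
    alternatingMoment w (n + 1) = 2 / π * alternatingMoment w n := by
  rw [alternatingMoment_succ, h, Bool.not_not, alternatingMoment]

lemma descentProb_le_integral_mul_alternatingWeight (w : ℕ → Bool) (n : ℕ) :
    descentProb w (n + 2) ≤
      ∫ x in 0..1, endDensity w n x * alternatingWeight (!w (n + 1)) x := by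
  have hc := continuous_endDensity w n
  rw [← integral_endDensity]
  cases h : w (n + 1) with
  | false =>
    have hparts := integral_endDensity_succ_mul_deriv_of_false h
      (fun x => (hasDerivAt_id x).sub_const 1) continuous_const (sub_self _)
    simp only [mul_one, id, ← intervalIntegral.integral_neg, ← mul_neg, neg_sub] at hparts
    rw [hparts]
    refine intervalIntegral.integral_mono_on zero_le_one
      ((by fun_prop : Continuous _).intervalIntegrable _ _)
      ((hc.mul (continuous_alternatingWeight _)).intervalIntegrable _ _) fun x hx => ?_
    exact mul_le_mul_of_nonneg_left (one_sub_le_alternatingWeight_true hx)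
      (endDensity_nonneg w n hx)
  | true =>
    have hparts := integral_endDensity_succ_mul_deriv_of_true h hasDerivAt_id continuous_const rfl
    simp only [mul_one, id] at hparts
    rw [hparts]
    refine intervalIntegral.integral_mono_on zero_le_one
      ((by fun_prop : Continuous _).intervalIntegrable _ _)
      ((hc.mul (continuous_alternatingWeight _)).intervalIntegrable _ _) fun x hx => ?_
    exact mul_le_mul_of_nonneg_left (le_alternatingWeight_false hx) (endDensity_nonneg w n hx)

lemma two_div_pi_mul_descentProb_le_alternatingMoment (w : ℕ → Bool) (n : ℕ) :
    2 / π * descentProb w (n + 2) ≤ alternatingMoment w (n + 1) := by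
  rw [alternatingMoment_succ]
  gcongr
  exact descentProb_le_integral_mul_alternatingWeight w n

end AlternatingMoment

section ThresholdWord

lemma exists_forall_eq_of_dependsOn_Iio {α : Type*} [Nonempty α] {F : ℕ → (ℕ → α) → α}
    (hF : ∀ n, DependsOn (F n) (Set.Iio n)) : ∃ w : ℕ → α, ∀ n, w n = F n w := by
  let w : ℕ → α := Nat.strongRec fun n init =>
    F n fun i => if h : i < n then init i h else Classical.arbitrary α
  refine ⟨w, fun n => (Nat.strongRec_eq _ n).trans <| hF n fun i hi => ?_⟩
  exact dif_pos (Set.mem_Iio.1 hi)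

/-- The word built greedily against the threshold `L ^ n`: the `n`-th letter is `false` while the
probability is at least `L ^ n`, and otherwise differs from the preceding letter. Position `0` obeys
the first rule, so `0 - 1` never matters. -/
def IsThresholdWord (L : ℝ) (w : ℕ → Bool) : Prop :=
  ∀ n, w n = if L ^ n ≤ descentProb w n then false else !w (n - 1)

variable {L : ℝ} {w : ℕ → Bool}

lemma exists_isThresholdWord (L : ℝ) : ∃ w, IsThresholdWord L w := by
  refine exists_forall_eq_of_dependsOn_Iio
    (F := fun n w => if L ^ n ≤ descentProb w n then false else !w (n - 1)) fun n u v h => ?_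
  cases n with
  | zero => simp [descentProb_zero]
  | succ n =>
    have hprob : descentProb u (n + 1) = descentProb v (n + 1) := dependsOn_descentProb _ h
    have hletter : u n = v n := h n n.lt_succ_self
    change (if L ^ (n + 1) ≤ descentProb u (n + 1) then false else !u n) =
      if L ^ (n + 1) ≤ descentProb v (n + 1) then false else !v n
    rw [hprob, hletter]

lemma IsThresholdWord.eq_false (hw : IsThresholdWord L w) {n : ℕ} (h : L ^ n ≤ descentProb w n) :
    w n = false :=
  (hw n).trans (if_pos h)

lemma IsThresholdWord.eq_not (hw : IsThresholdWord L w) {n : ℕ}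
    (h : descentProb w (n + 1) < L ^ (n + 1)) : w (n + 1) = !w n :=
  (hw (n + 1)).trans (if_neg h.not_ge)

lemma IsThresholdWord.exists_run (hw : IsThresholdWord L w) {a : ℝ} (hL : 0 ≤ L) (ha : 0 < a)
    (hLa : L ≤ a) (n : ℕ) :
    ∃ m ≤ n, descentProb w m ≤ (1 + 1 / a) * a ^ m ∧ ∀ i, m < i → i < n → w i = false := by
  induction n with
  | zero => exact ⟨0, le_rfl, by simp [descentProb_zero, ha.le], fun i _ h => absurd h (by omega)⟩
  | succ n ih =>
    rcases lt_or_ge (descentProb w n) (L ^ n) with h | h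
    · refine ⟨n + 1, le_rfl, ?_, fun i h h' => absurd h' (by omega)⟩
      calc descentProb w (n + 1) ≤ L ^ n := (descentProb_succ_le w n).trans h.le
        _ ≤ a ^ n := by gcongr
        _ = 1 / a * a ^ (n + 1) := by field_simp; ring
        _ ≤ (1 + 1 / a) * a ^ (n + 1) := by gcongr; linarith
    · obtain ⟨m, hm, hbound, hrun⟩ := ih
      refine ⟨m, by omega, hbound, fun i hi hi' => ?_⟩
      obtain hin | rfl : i < n ∨ i = n := by omega
      · exact hrun i hi hin
      · exact hw.eq_false h

lemma IsThresholdWord.descentProb_le (hw : IsThresholdWord L w) {a : ℝ} (hL : 0 ≤ L) (ha : 0 < a)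
    (hLa : L ≤ a) (n : ℕ) :
    descentProb w n ≤ (1 + 1 / a) * Real.exp (1 / a) * a ^ n := by
  obtain ⟨m, hm, hbound, hrun⟩ := hw.exists_run hL ha hLa n
  obtain ⟨k, rfl⟩ := Nat.exists_eq_add_of_le hm
  calc descentProb w (m + k) ≤ descentProb w m / k.factorial := descentProb_le_of_run hrun
    _ ≤ (1 + 1 / a) * a ^ m / k.factorial := by gcongr
    _ = (1 + 1 / a) * ((1 / a) ^ k / k.factorial) * a ^ (m + k) := by
      rw [pow_add, div_pow, one_pow]
      field_simp
    _ ≤ (1 + 1 / a) * Real.exp (1 / a) * a ^ (m + k) := by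
      gcongr
      exact Real.pow_div_factorial_le_exp _ (by positivity) k

lemma IsThresholdWord.le_alternatingMoment (hw : IsThresholdWord L w) (hL0 : 0 ≤ L)
    (hL1 : L ≤ 2 / Real.pi) (n : ℕ) :
    2 / Real.pi * (L ^ n / (n + 1)) ≤ alternatingMoment w n := by
  induction n with
  | zero => simp [alternatingMoment_zero (hw.eq_false (n := 0) (by simp [descentProb_zero]))]
  | succ n ih =>
    rcases lt_or_ge (descentProb w (n + 1)) (L ^ (n + 1)) with h | h
    · rw [alternatingMoment_succ_of_eq_not (hw.eq_not h)]
      gcongr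
      calc L ^ (n + 1) / ((n + 1 : ℕ) + 1) ≤ L ^ (n + 1) / (n + 1) := by
            gcongr
            simp
        _ = L * (L ^ n / (n + 1)) := by ring
        _ ≤ 2 / Real.pi * (L ^ n / (n + 1)) := by gcongr
        _ ≤ alternatingMoment w n := ih
    · refine le_trans ?_ (two_div_pi_mul_descentProb_le_alternatingMoment w n)
      gcongr
      calc L ^ (n + 1) / ((n + 1 : ℕ) + 1) = L ^ (n + 1) / (n + 2) := by
            push_cast
            ring
        _ ≤ descentProb w (n + 1) / (n + 2) := by gcongr
        _ ≤ descentProb w (n + 2) := descentProb_div_le_descentProb_succ w n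

lemma IsThresholdWord.le_descentProb (hw : IsThresholdWord L w) (hL0 : 0 ≤ L)
    (hL1 : L ≤ 2 / Real.pi) (n : ℕ) : L ^ n / n ≤ descentProb w n := by
  cases n with
  | zero => simp [descentProb_zero]
  | succ n =>
    calc L ^ (n + 1) / (n + 1 : ℕ) = L * (L ^ n / (n + 1)) := by
          push_cast
          ring
      _ ≤ 2 / Real.pi * (L ^ n / (n + 1)) := by gcongr
      _ ≤ alternatingMoment w n := hw.le_alternatingMoment hL0 hL1 n
      _ ≤ descentProb w (n + 1) := alternatingMoment_le w n

end ThresholdWord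

section RootLimit

lemma tendsto_const_rpow_one_div_nat {c : ℝ} (hc : c ≠ 0) :
    Tendsto (fun n : ℕ => c ^ (1 / (n : ℝ))) atTop (nhds 1) := by
  have h := (Real.continuous_const_rpow hc).tendsto 0
  rw [Real.rpow_zero] at h
  exact h.comp tendsto_one_div_atTop_nhds_zero_nat

lemma tendsto_mul_pow_rpow_one_div {u : ℕ → ℝ} (hu : ∀ n, 0 ≤ u n)
    (h : Tendsto (fun n : ℕ => u n ^ (1 / (n : ℝ))) atTop (nhds 1)) {a : ℝ} (ha : 0 ≤ a) :
    Tendsto (fun n : ℕ => (u n * a ^ n) ^ (1 / (n : ℝ))) atTop (nhds a) := by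
  have hmul := h.mul_const a
  rw [one_mul] at hmul
  refine hmul.congr' ?_
  filter_upwards [eventually_ne_atTop 0] with n hn
  rw [Real.mul_rpow (hu n) (by positivity), one_div, Real.pow_rpow_inv_natCast ha hn]

lemma tendsto_rpow_one_div_of_le_of_le {u : ℕ → ℝ} {L : ℝ} (hL : 0 ≤ L)
    (hlower : ∀ n, L ^ n / n ≤ u n) (hupper : ∀ a > L, ∃ C > 0, ∀ n, u n ≤ C * a ^ n) :
    Tendsto (fun n : ℕ => u n ^ (1 / (n : ℝ))) atTop (nhds L) := by
  have hu (n : ℕ) : 0 ≤ u n := le_trans (by positivity) (hlower n)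
  refine tendsto_order.2 ⟨fun b hb => ?_, fun b hb => ?_⟩
  · have hinv : Tendsto (fun n : ℕ => (n : ℝ)⁻¹ ^ (1 / (n : ℝ))) atTop (nhds 1) := by
      have h := (tendsto_rpow_div.comp tendsto_natCast_atTop_atTop).inv₀ one_ne_zero
      rw [inv_one] at h
      exact h.congr fun n => (Real.inv_rpow n.cast_nonneg _).symm
    have hlim := tendsto_mul_pow_rpow_one_div (fun n => by positivity) hinv hL
    filter_upwards [hlim.eventually_const_lt hb] with n hn
    refine hn.trans_le (Real.rpow_le_rpow (by positivity) ?_ (by positivity))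
    rw [inv_mul_eq_div]
    exact hlower n
  · obtain ⟨a, hLa, hab⟩ := exists_between hb
    obtain ⟨C, hC, hbound⟩ := hupper a hLa
    have hlim := tendsto_mul_pow_rpow_one_div (fun _ => hC.le)
      (tendsto_const_rpow_one_div_nat hC.ne') (hL.trans hLa.le)
    filter_upwards [hlim.eventually_lt_const hab] with n hn
    exact (Real.rpow_le_rpow (hu n) (hbound n) (by positivity)).trans_lt hn

end RootLimit

theorem stmt0 (L : ℝ) (hL0 : 0 ≤ L) (hL1 : L ≤ 2 / Real.pi) :
    ∃ w : ℕ → Bool,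
      Tendsto (fun n : ℕ => ((dCount w n : ℝ) / (Nat.factorial n : ℝ)) ^ (1 / (n : ℝ)))
        atTop (nhds L) := by
  obtain ⟨w, hw⟩ := exists_isThresholdWord L
  refine ⟨w, tendsto_rpow_one_div_of_le_of_le hL0 (hw.le_descentProb hL0 hL1) fun a ha => ?_⟩
  have ha0 : 0 < a := hL0.trans_lt ha
  exact ⟨(1 + 1 / a) * Real.exp (1 / a), by positivity, hw.descentProb_le hL0 ha0 ha.le⟩
end

section
/- For every real number L with 0 ≤ L ≤ 3^{−1/3} and every ε > 0, there exists a periodic infinite binary word w (i.e., there is a positive integer q with w_{i+q} = w_i for all i ≥ 1) such that the limit lim_{n→∞} (p_n(w)/n!)^{1/n} exists and satisfies |lim_{n→∞} (p_n(w)/n!)^{1/n} − L| < ε. -/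
open Filter

/-- `IsPeak π i` says that the (1-based) position `i` is a peak of the permutation `π` of
`{1,…,n}` (modeled as `Fin n`, zero-based): `2 ≤ i ≤ n-1` and `π(i-1) < π(i) > π(i+1)`. -/
def IsPeak {n : ℕ} (π : Equiv.Perm (Fin n)) (i : ℕ) : Prop :=
  ∃ (h2 : 2 ≤ i) (hn : i < n),
    π ⟨i - 2, by omega⟩ < π ⟨i - 1, by omega⟩ ∧ π ⟨i, hn⟩ < π ⟨i - 1, by omega⟩

/-- `pCount w n` is the number of permutations `π` of `{1,…,n}` such that for every
`1 ≤ i ≤ n-1`, `i` is a peak of `π` iff the `i`-th letter of the infinite binary word `w`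
(1-indexed, `w 0` is irrelevant) equals `1` (i.e. `true`). -/
noncomputable def pCount (w : ℕ → Bool) (n : ℕ) : ℕ :=
  Nat.card {π : Equiv.Perm (Fin n) //
    ∀ i : ℕ, 1 ≤ i → i + 1 ≤ n → (IsPeak π i ↔ w i = true)}

/-!
If a word has a peak at the last position but one before a cut and at the second position after
it, these peaks already exclude peaks at the two positions next to the cut. The letters on the two
sides then only constrain the relative orders of two disjoint windows of the permutation, which
are independent and uniform. Hence for a word of period `q` with such a cut at the end of the
period, `p_n(w) / n!` is multiplied by `p_q(w) / q!` over each period, and the growth rate is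
`(p_q(w) / q!) ^ (1 / q)`.

Take a period made of `a` windows of length `3` with a peak in the middle, each contributing a
factor `1 / 3`, and one window of length `2h + 3` whose only peaks are next to its ends. Between
these peaks a permutation decreases and then increases, so the long window has probability at most
`2 / (h + 1)!`, which eventually drops below `L ^ (2h + 3)`. Logarithms of growth rates are mediants
in which each short window moves the value towards `-(log 3) / 3`; for large `h` the steps are so
small that a suitable `a` brings the rate close to any `L` between `0` and `3 ^ (-1 / 3)`.
-/

section Standardization

variable {n h : ℕ} {α : Type*} [LinearOrder α]

/-- The permutation of `Fin n` whose entries are in the same relative order as those of `f`.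
Ties are broken from left to right, so only injective `f` have all their comparisons preserved. -/
def standardization (f : Fin n → α) : Equiv.Perm (Fin n) := (Tuple.sort f)⁻¹

theorem standardization_lt_iff {f : Fin n → α} (hf : Function.Injective f) {i j : Fin n} :
    standardization f i < standardization f j ↔ f i < f j := by
  have hmono : StrictMono (f ∘ Tuple.sort f) :=
    (Tuple.monotone_sort f).strictMono_of_injective (hf.comp (Tuple.sort f).injective)
  simp [standardization, ← hmono.lt_iff_lt]

theorem standardization_comp_perm {f : Fin n → α} (hf : Function.Injective f)
    (τ : Equiv.Perm (Fin n)) : standardization (f ∘ τ) = standardization f * τ := by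
  have hsort : τ * Tuple.sort (f ∘ τ) = Tuple.sort f :=
    Equiv.ext fun i => hf (congrFun (Tuple.comp_perm_comp_sort_eq_comp_sort (f := f) (σ := τ)) i)
  simp [standardization, ← hsort]

theorem standardization_eq_one_iff {f : Fin n → α} (hf : Function.Injective f) :
    standardization f = 1 ↔ StrictMono f := by
  rw [standardization, inv_eq_one]
  exact Tuple.sort_eq_refl_iff_monotone.trans
    ⟨fun hmono => hmono.strictMono_of_injective hf, StrictMono.monotone⟩

theorem standardization_comp_viaFintypeEmbedding (π : Equiv.Perm (Fin n)) (f : Fin h ↪ Fin n)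
    (τ : Equiv.Perm (Fin h)) :
    standardization (⇑(π * τ.viaFintypeEmbedding f) ∘ f) = standardization (π ∘ f) * τ := by
  rw [← standardization_comp_perm (π.injective.comp f.injective)]
  congr 1
  ext i
  simp

end Standardization

theorem card_comp_mul_card_of_equivariant {X G : Type*} [Group G] (act : G → Equiv.Perm X)
    (φ : X → G) (hφ : ∀ g x, φ (act g x) = φ x * g) (A : G → Prop) :
    Nat.card {x // A (φ x)} * Nat.card G = Nat.card X * Nat.card {g // A g} := by
  have hφ_symm (g : G) (x : X) : φ ((act g).symm x) = φ x * g⁻¹ := by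
    rw [eq_mul_inv_iff_mul_eq, ← hφ, Equiv.apply_symm_apply]
  rw [← Nat.card_prod, ← Nat.card_prod]
  exact Nat.card_congr
    { toFun := fun p => (act p.2 p.1, ⟨φ p.1, p.1.2⟩)
      invFun := fun p => (⟨(act ((p.2 : G)⁻¹ * φ p.1)).symm p.1, by simpa [hφ_symm] using p.2.2⟩,
        (p.2 : G)⁻¹ * φ p.1)
      left_inv := fun p => by simp [hφ]
      right_inv := fun p => by simp [hφ_symm] }

section PermProb

/-- The probability that a uniformly random permutation of `Fin n` satisfies `A`. -/
noncomputable def permProb {n : ℕ} (A : Equiv.Perm (Fin n) → Prop) : ℝ :=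
  Nat.card {π // A π} / n.factorial

variable {n m h : ℕ}

theorem permProb_pos {A : Equiv.Perm (Fin n) → Prop} (hA : ∃ π, A π) : 0 < permProb A := by
  have : Nonempty {π // A π} := nonempty_subtype.2 hA
  have : 0 < Nat.card {π // A π} := Nat.card_pos
  unfold permProb
  positivity

theorem permProb_le_add {A B C : Equiv.Perm (Fin n) → Prop} (hABC : ∀ π, A π → B π ∨ C π) :
    permProb A ≤ permProb B + permProb C := by
  rw [permProb, permProb, permProb, ← add_div, ← Nat.cast_add]
  gcongr
  exact (Set.ncard_le_ncard hABC).trans (Set.ncard_union_le {π | B π} {π | C π})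

theorem permProb_standardization_comp (f : Fin h ↪ Fin n) (A : Equiv.Perm (Fin h) → Prop) :
    permProb (fun π : Equiv.Perm (Fin n) => A (standardization (π ∘ f))) = permProb A := by
  have hcard := card_comp_mul_card_of_equivariant
    (fun τ : Equiv.Perm (Fin h) => Equiv.mulRight (τ.viaFintypeEmbedding f))
    (fun π : Equiv.Perm (Fin n) => standardization (π ∘ f))
    (fun τ π => standardization_comp_viaFintypeEmbedding π f τ) A
  rw [Nat.card_perm, Nat.card_perm, Nat.card_fin, Nat.card_fin, mul_comm n.factorial] at hcard
  rw [permProb, permProb, div_eq_div_iff (by positivity) (by positivity)]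
  exact_mod_cast hcard

theorem permProb_strictMono_comp (f : Fin h ↪ Fin n) :
    permProb (fun π : Equiv.Perm (Fin n) => StrictMono (π ∘ f)) = 1 / h.factorial := by
  simp_rw [← standardization_eq_one_iff (Equiv.injective _ |>.comp f.injective)]
  rw [permProb_standardization_comp f (· = 1)]
  simp [permProb]

theorem permProb_standardization_castAdd_and_natAdd (A : Equiv.Perm (Fin n) → Prop)
    (B : Equiv.Perm (Fin m) → Prop) :
    permProb (fun π : Equiv.Perm (Fin (n + m)) =>
      A (standardization (π ∘ Fin.castAdd m)) ∧ B (standardization (π ∘ Fin.natAdd n))) =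
      permProb A * permProb B := by
  let act : Equiv.Perm (Fin n) × Equiv.Perm (Fin m) → Equiv.Perm (Equiv.Perm (Fin (n + m))) :=
    fun τ => Equiv.mulRight (finSumFinEquiv.permCongr (Equiv.Perm.sumCongr τ.1 τ.2))
  have hact (τ π) : (standardization (act τ π ∘ Fin.castAdd m),
      standardization (act τ π ∘ Fin.natAdd n)) =
      (standardization (π ∘ Fin.castAdd m), standardization (π ∘ Fin.natAdd n)) * τ := by
    ext1
    · rw [Prod.fst_mul,
        ← standardization_comp_perm (π.injective.comp (Fin.castAdd_injective n m))]
      exact congrArg standardization (funext fun i => by simp [act, Equiv.permCongr_apply])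
    · rw [Prod.snd_mul,
        ← standardization_comp_perm (π.injective.comp (Fin.natAdd_injective m n))]
      exact congrArg standardization (funext fun i => by simp [act, Equiv.permCongr_apply])
  have hcard := card_comp_mul_card_of_equivariant act
    (fun π => (standardization (π ∘ Fin.castAdd m), standardization (π ∘ Fin.natAdd n))) hact
    fun τ => A τ.1 ∧ B τ.2
  rw [Nat.card_congr (Equiv.subtypeProdEquivProd (p := A) (q := B))] at hcard
  simp only [Nat.card_prod, Nat.card_perm, Nat.card_fin] at hcard
  rw [permProb, permProb, permProb, div_mul_div_comm,
    div_eq_div_iff (by positivity) (by positivity), mul_comm _ ((n + m).factorial : ℝ)]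
  exact_mod_cast hcard

end PermProb

/-- The peaks of `π` are exactly the positions marked by the word `w`; this is the condition
counted by `pCount`. -/
def HasPeakPattern (w : ℕ → Bool) {n : ℕ} (π : Equiv.Perm (Fin n)) : Prop :=
  ∀ i : ℕ, 1 ≤ i → i + 1 ≤ n → (IsPeak π i ↔ w i = true)

theorem hasPeakPattern_iff {w : ℕ → Bool} (hw : w 1 = false) {n : ℕ} {π : Equiv.Perm (Fin n)} :
    HasPeakPattern w π ↔ ∀ i, 2 ≤ i → i < n → (IsPeak π i ↔ w i = true) := by
  refine ⟨fun hπ i hi => hπ i (by omega), fun hπ i hi hin => ?_⟩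
  obtain rfl | hi : i = 1 ∨ 2 ≤ i := by omega
  · simp [IsPeak, hw]
  · exact hπ i hi hin

theorem isPeak_standardization_comp {n m k : ℕ} {f : Fin m → Fin n}
    (hf : ∀ j, (f j : ℕ) = k + j) (π : Equiv.Perm (Fin n)) {i : ℕ} (hi : 2 ≤ i) (him : i < m) :
    IsPeak (standardization (π ∘ f)) i ↔ IsPeak π (k + i) := by
  have hf_inj : Function.Injective f := fun j l hjl => by
    have := hf j
    have := hf l
    omega
  have hf_mk (j : ℕ) (hj : j < m) (hkj : k + j < n) : f ⟨j, hj⟩ = ⟨k + j, hkj⟩ := Fin.ext (hf _)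
  have hkn : k + i < n := by
    have := (f ⟨i, him⟩).isLt
    simpa only [hf] using this
  have hsub_two : k + i - 2 = k + (i - 2) := by omega
  have hsub_one : k + i - 1 = k + (i - 1) := by omega
  simp only [IsPeak, standardization_lt_iff (π.injective.comp hf_inj), Function.comp_apply,
    hsub_two, hsub_one, hi, him, hkn, show 2 ≤ k + i by omega, exists_true_left]
  rw [hf_mk (i - 2), hf_mk (i - 1), hf_mk i]

/-- A place after which a word can be cut: the peaks two steps apart on either side already
prevent the positions `n` and `n + 1` next to the cut from being peaks, so the letters on the two
sides impose independent conditions on a permutation. -/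
structure IsCut (w : ℕ → Bool) (n : ℕ) : Prop where
  two_lt : 2 < n
  pred : w (n - 1) = true
  self : w n = false
  succ : w (n + 1) = false
  add_two : w (n + 2) = true

theorem not_isPeak_succ_of_isPeak {n i : ℕ} {π : Equiv.Perm (Fin n)} (hi : IsPeak π i) :
    ¬ IsPeak π (i + 1) := by
  rintro ⟨_, _, hlt, -⟩
  obtain ⟨_, _, -, hgt⟩ := hi
  exact lt_asymm hlt hgt

theorem IsCut.hasPeakPattern_add_iff {w : ℕ → Bool} {n m : ℕ} (hcut : IsCut w n) (hm : 2 < m)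
    (hw : w 1 = false) {π : Equiv.Perm (Fin (n + m))} :
    HasPeakPattern w π ↔ HasPeakPattern w (standardization (π ∘ Fin.castAdd m)) ∧
      HasPeakPattern (fun i => w (n + i)) (standardization (π ∘ Fin.natAdd n)) := by
  have hn := hcut.two_lt
  have left {i : ℕ} (hi : 2 ≤ i) (hin : i < n) :
      IsPeak (standardization (π ∘ Fin.castAdd m)) i ↔ IsPeak π i := by
    rw [isPeak_standardization_comp (k := 0) (by simp) π hi hin, zero_add]
  have right {i : ℕ} (hi : 2 ≤ i) (him : i < m) :
      IsPeak (standardization (π ∘ Fin.natAdd n)) i ↔ IsPeak π (n + i) :=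
    isPeak_standardization_comp (fun _ => rfl) π hi him
  rw [hasPeakPattern_iff hw, hasPeakPattern_iff hw, hasPeakPattern_iff hcut.succ]
  constructor
  · exact fun hπ =>
      ⟨fun i hi hin => by rw [left hi hin, hπ i hi (by omega)],
        fun i hi him => by rw [right hi him, hπ (n + i) (by omega) (by omega)]⟩
  · rintro ⟨hleft, hright⟩ i hi hin
    have hpeak_pred : IsPeak π (n - 1) :=
      (left (by omega) (by omega)).1 ((hleft (n - 1) (by omega) (by omega)).2 hcut.pred)
    have hpeak_add_two : IsPeak π (n + 2) :=
      (right le_rfl hm).1 ((hright 2 le_rfl hm).2 hcut.add_two)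
    obtain hlt | rfl | rfl | ⟨j, hj, rfl⟩ :
        i < n ∨ i = n ∨ i = n + 1 ∨ ∃ j, 2 ≤ j ∧ i = n + j := by
      by_cases h : n + 2 ≤ i
      · exact .inr (.inr (.inr ⟨i - n, by omega, by omega⟩))
      · omega
    · rw [← left hi hlt, hleft i hi hlt]
    · have := not_isPeak_succ_of_isPeak hpeak_pred
      rw [Nat.sub_add_cancel (by omega)] at this
      simp [this, hcut.self]
    · have := mt (not_isPeak_succ_of_isPeak (π := π) (i := n + 1)) (not_not.2 hpeak_add_two)
      simp [this, hcut.succ]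
    · rw [← right hj (by omega), hright j hj (by omega)]

/-- The probability `p_n(w) / n!` that a uniformly random permutation of `{1,…,n}` has the peaks
prescribed by `w`. -/
noncomputable def peakProb (w : ℕ → Bool) (n : ℕ) : ℝ :=
  (pCount w n : ℝ) / n.factorial

theorem peakProb_eq_permProb (w : ℕ → Bool) (n : ℕ) :
    peakProb w n = permProb fun π : Equiv.Perm (Fin n) => HasPeakPattern w π := rfl

theorem peakProb_congr {w v : ℕ → Bool} {n : ℕ} (hwv : ∀ i, 1 ≤ i → i < n → w i = v i) :
    peakProb w n = peakProb v n := by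
  have : ∀ π : Equiv.Perm (Fin n), HasPeakPattern w π ↔ HasPeakPattern v π := fun π =>
    forall₃_congr fun i hi hin => by rw [hwv i hi hin]
  simp only [peakProb_eq_permProb, this]

theorem IsCut.peakProb_add {w : ℕ → Bool} {n m : ℕ} (hcut : IsCut w n) (hm : 2 < m)
    (hw : w 1 = false) :
    peakProb w (n + m) = peakProb w n * peakProb (fun i => w (n + i)) m := by
  simp only [peakProb_eq_permProb, hcut.hasPeakPattern_add_iff hm hw]
  exact permProb_standardization_castAdd_and_natAdd _ _

theorem peakProb_three {w : ℕ → Bool} (h1 : w 1 = false) (h2 : w 2 = true) :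
    peakProb w 3 = 1 / 3 := by
  have hpeak (π : Equiv.Perm (Fin 3)) : HasPeakPattern w π ↔ π 0 < π 1 ∧ π 2 < π 1 := by
    rw [hasPeakPattern_iff h1]
    constructor
    · intro hπ
      obtain ⟨_, _, hlt⟩ := (hπ 2 le_rfl (by omega)).2 h2
      exact hlt
    · intro hlt i hi hi3
      obtain rfl : i = 2 := by omega
      simpa [IsPeak, h2] using hlt
  have hcard : Nat.card {π : Equiv.Perm (Fin 3) // π 0 < π 1 ∧ π 2 < π 1} = 2 := by
    rw [Nat.card_eq_fintype_card]
    decide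
  simp only [peakProb_eq_permProb, hpeak, permProb, hcard]
  norm_num [Nat.factorial]

/-- Adding `n` to the entries of the identity at the marked positions makes exactly those positions
peaks. -/
theorem peakProb_pos {w : ℕ → Bool} (h1 : w 1 = false)
    (hw : ∀ i, w i = true → w (i + 1) = false) (n : ℕ) : 0 < peakProb w n := by
  let f : Fin n → ℕ := fun j => j + if w (j + 1) then n else 0
  have hf : Function.Injective f := fun i j hij => by
    dsimp only [f] at hij
    split_ifs at hij <;> omega
  refine permProb_pos ⟨standardization f, (hasPeakPattern_iff h1).2 fun i hi hin => ?_⟩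
  obtain ⟨i, rfl⟩ := Nat.exists_eq_add_of_le' hi
  simp only [IsPeak, standardization_lt_iff hf, f, hi, hin, exists_true_left,
    Nat.add_sub_cancel, show i + 2 - 1 = i + 1 by omega]
  constructor
  · rintro ⟨-, hgt⟩
    by_contra hwi
    rw [if_neg hwi] at hgt
    omega
  · intro hwi
    have hsucc : w (i + 2 + 1) = false := hw _ hwi
    have hpred : w (i + 1) = false := by
      by_contra hwi'
      simp [hw (i + 1) (by simpa using hwi')] at hwi
    rw [hpred, hwi, hsucc]
    grind

theorem strictAntiOn_or_strictMonoOn_of_no_peak {α : Type*} [LinearOrder α] {f : ℕ → α}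
    {a c b : ℕ} (hcb : c ≤ b) (hinj : Set.InjOn f (Set.Icc a b))
    (hpeak : ∀ i, a ≤ i → i + 2 ≤ b → ¬ (f i < f (i + 1) ∧ f (i + 2) < f (i + 1))) :
    StrictAntiOn f (Set.Icc a c) ∨ StrictMonoOn f (Set.Icc c b) := by
  have hne {i : ℕ} (hai : a ≤ i) (hib : i + 1 ≤ b) : f i ≠ f (i + 1) := fun h => by
    have := hinj ⟨hai, by omega⟩ ⟨by omega, hib⟩ h
    omega
  by_cases hasc : ∃ i, a ≤ i ∧ i + 1 ≤ c ∧ f i < f (i + 1)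
  · right
    obtain ⟨i, hai, hic, hi⟩ := hasc
    have hstep (j : ℕ) (hij : i ≤ j) : j + 1 ≤ b → f j < f (j + 1) := by
      induction j, hij using Nat.le_induction with
      | base => exact fun _ => hi
      | succ j hij ih =>
        intro hjb
        exact (hne (by omega) hjb).lt_of_le
          (not_lt.1 fun hlt => hpeak j (by omega) hjb ⟨ih (by omega), hlt⟩)
    exact strictMonoOn_of_lt_add_one Set.ordConnected_Icc
      fun j _ hj hj' => hstep j (Nat.le_of_succ_le (hic.trans hj.1)) hj'.2
  · left
    push Not at hasc
    exact strictAntiOn_of_add_one_lt Set.ordConnected_Icc fun j _ hj hj' =>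
      (hasc j hj.1 hj'.2).lt_of_ne (hne hj.1 (hj'.2.trans hcb)).symm

theorem peakProb_le_two_div_factorial {w : ℕ → Bool} {s h n : ℕ} (hn : s + 2 * h < n)
    (hw : ∀ i, s + 1 < i → i ≤ s + 2 * h → w i = false) :
    peakProb w n ≤ 2 / (h + 1).factorial := by
  have : NeZero n := ⟨by omega⟩
  have hofNat {j : ℕ} (hj : j < n) : Fin.ofNat n j = ⟨j, hj⟩ := Fin.ext (Nat.mod_eq_of_lt hj)
  have hofNat_inj : Set.InjOn (Fin.ofNat n) (Set.Iio n) := fun i hi j hj hij => by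
    rwa [hofNat (Set.mem_Iio.1 hi), hofNat (Set.mem_Iio.1 hj), Fin.mk.injEq] at hij
  let desc : Fin (h + 1) ↪ Fin n := ⟨fun j => Fin.ofNat n (s + h - j), fun i j hij => by
    have := hofNat_inj (by grind) (by grind) hij
    omega⟩
  let asc : Fin (h + 1) ↪ Fin n := ⟨fun j => Fin.ofNat n (s + h + j), fun i j hij => by
    have := hofNat_inj (by grind) (by grind) hij
    omega⟩
  have hV (π : Equiv.Perm (Fin n)) (hπ : HasPeakPattern w π) :
      StrictMono (π ∘ desc) ∨ StrictMono (π ∘ asc) := by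
    have hpeak (i : ℕ) (hsi : s ≤ i) (hi : i + 2 ≤ s + 2 * h) :
        ¬ (π (Fin.ofNat n i) < π (Fin.ofNat n (i + 1)) ∧
          π (Fin.ofNat n (i + 2)) < π (Fin.ofNat n (i + 1))) := by
      rw [hofNat (by omega), hofNat (by omega), hofNat (by omega)]
      intro hlt
      have := (hπ (i + 2) (by omega) (by omega)).1 ⟨by omega, by omega, hlt⟩
      simp [hw (i + 2) (by omega) hi] at this
    refine (strictAntiOn_or_strictMonoOn_of_no_peak (f := fun j => π (Fin.ofNat n j)) (a := s)
      (c := s + h) (b := s + 2 * h) (by omega)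
      (π.injective.comp_injOn (hofNat_inj.mono fun i hi => hi.2.trans_lt hn)) hpeak).imp
      (fun hanti i j hij => hanti ?_ ?_ ?_) (fun hmono i j hij => hmono ?_ ?_ ?_) <;> grind
  calc peakProb w n
      ≤ permProb (fun π : Equiv.Perm (Fin n) => StrictMono (π ∘ desc)) +
          permProb (fun π : Equiv.Perm (Fin n) => StrictMono (π ∘ asc)) := permProb_le_add hV
    _ = 2 / (h + 1).factorial := by
        rw [permProb_strictMono_comp, permProb_strictMono_comp]
        ring

theorem tendsto_div_natCast_of_add_eq_add {u : ℕ → ℝ} {c : ℝ} {q N : ℕ} (hq : 0 < q)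
    (hu : ∀ n, N ≤ n → u (q + n) = c + u n) :
    Tendsto (fun n : ℕ => u n / n) atTop (nhds (c / q)) := by
  have hq' : (q : ℝ) ≠ 0 := Nat.cast_ne_zero.2 hq.ne'
  set v : ℕ → ℝ := fun n => u n - n * (c / q) with hv
  have hv_periodic : Function.Periodic (fun k => v (N + k)) q := fun k => by
    have hshift : N + (k + q) = q + (N + k) := by ring
    simp only [hv, hshift, hu _ (Nat.le_add_right N k)]
    push_cast
    field_simp
    ring
  have hv_bdd : ∀ᶠ n in atTop, |v n| ≤ ∑ k ∈ Finset.range q, |v (N + k)| := by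
    filter_upwards [eventually_ge_atTop N] with n hn
    obtain ⟨k, rfl⟩ := Nat.exists_eq_add_of_le hn
    rw [← hv_periodic.map_mod_nat k]
    exact Finset.single_le_sum (f := fun k => |v (N + k)|) (fun _ _ => abs_nonneg _)
      (Finset.mem_range.2 (Nat.mod_lt k hq))
  have hv_div : Tendsto (fun n : ℕ => v n / n) atTop (nhds 0) :=
    tendsto_bdd_div_atTop_nhds_zero (hv_bdd.mono fun n hn => (abs_le.1 hn).1)
      (hv_bdd.mono fun n hn => (abs_le.1 hn).2) tendsto_natCast_atTop_atTop
  rw [← zero_add (c / q)]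
  refine (hv_div.add_const (c / q)).congr' ?_
  filter_upwards [eventually_gt_atTop 0] with n hn
  simp only [hv]
  field_simp
  ring

theorem tendsto_rpow_one_div_of_add_eq_mul {g : ℕ → ℝ} {r : ℝ} {q N : ℕ} (hr : 0 < r)
    (hq : 0 < q) (hg : ∀ n, 0 < g n) (hgr : ∀ n, N ≤ n → g (q + n) = r * g n) :
    Tendsto (fun n : ℕ => g n ^ (1 / (n : ℝ))) atTop (nhds (r ^ (1 / (q : ℝ)))) := by
  have hlog : Tendsto (fun n : ℕ => Real.log (g n) / n) atTop (nhds (Real.log r / q)) :=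
    tendsto_div_natCast_of_add_eq_add hq fun n hn => by
      rw [hgr n hn, Real.log_mul hr.ne' (hg n).ne']
  simpa only [Real.rpow_def_of_pos hr, Real.rpow_def_of_pos (hg _), mul_one_div] using hlog.rexp

theorem exists_nat_abs_mediant_sub_le {ρ m b s l : ℝ} (hm : 0 < m) (hs : 0 ≤ s)
    (hb : b < l * s) (hρ : l * m ≤ ρ) :
    ∃ a : ℕ, |(ρ + a * b) / (m + a * s) - l| ≤ (l * s - b) / m := by
  set δ := l * s - b with hδ
  have hδ_pos : 0 < δ := sub_pos.2 hb
  set x := (ρ - l * m) / δ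
  have hx_mul : x * δ = ρ - l * m := div_mul_cancel₀ _ hδ_pos.ne'
  have hx_nonneg : 0 ≤ x := div_nonneg (sub_nonneg.2 hρ) hδ_pos.le
  refine ⟨⌊x⌋₊, ?_⟩
  have hfloor_le := Nat.floor_le hx_nonneg
  have hlt_floor := Nat.lt_floor_add_one x
  have hden : 0 < m + ⌊x⌋₊ * s := by positivity
  have herr : (ρ + ⌊x⌋₊ * b) / (m + ⌊x⌋₊ * s) - l = (x - ⌊x⌋₊) * δ / (m + ⌊x⌋₊ * s) := by
    rw [div_sub' hden.ne', sub_mul, hx_mul, hδ]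
    ring
  rw [herr, abs_of_nonneg (div_nonneg (mul_nonneg (by linarith) hδ_pos.le) hden.le)]
  calc (x - ⌊x⌋₊) * δ / (m + ⌊x⌋₊ * s) ≤ 1 * δ / m := by
        gcongr
        · linarith
        · exact le_add_of_nonneg_right (by positivity)
    _ = δ / m := by rw [one_mul]

theorem eventually_two_div_factorial_le_pow {x : ℝ} (hx : 0 < x) :
    ∀ᶠ h : ℕ in atTop, 2 / ((h + 1).factorial : ℝ) ≤ x ^ (2 * h + 3) := by
  have hlim := (FloorSemiring.tendsto_pow_div_factorial_atTop (x ^ 2)⁻¹).comp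
    (tendsto_add_atTop_nat 1)
  filter_upwards [hlim.eventually_le_const (show 0 < x / 2 by positivity)] with h hh
  simp only [Function.comp_apply, inv_pow, ← pow_mul] at hh
  rw [div_le_iff₀ (by positivity), inv_le_iff_one_le_mul₀ (by positivity)] at hh
  rw [div_le_iff₀ (by positivity)]
  calc (2 : ℝ) ≤ 2 * (x / 2 * (h + 1).factorial * x ^ (2 * (h + 1))) := by linarith
    _ = x ^ (2 * h + 3) * (h + 1).factorial := by ring

theorem tendsto_peakProb_rpow_of_periodic {w : ℕ → Bool} {q : ℕ} (hper : Function.Periodic w q)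
    (hcut : IsCut w q) (hw : ∀ i, w i = true → w (i + 1) = false) :
    Tendsto (fun n : ℕ => peakProb w n ^ (1 / (n : ℝ))) atTop
      (nhds (peakProb w q ^ (1 / (q : ℝ)))) := by
  have hper' (i : ℕ) : w (q + i) = w i := by rw [add_comm, hper i]
  have h1 : w 1 = false := by rw [← hper' 1, hcut.succ]
  refine tendsto_rpow_one_div_of_add_eq_mul (N := 3) (peakProb_pos h1 hw q)
    (by have := hcut.two_lt; omega) (peakProb_pos h1 hw) fun n hn => ?_
  simp only [hcut.peakProb_add hn h1, hper']

/-- The word with peaks at the middles of `a` consecutive windows of length `3`, followed by a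
window of length `2 * h + 3` with peaks at its second and penultimate positions. -/
def blockWord (a h i : ℕ) : Bool :=
  decide (i ≤ 3 * a + 2 ∧ i % 3 = 2 ∨ i = 3 * a + 2 * h + 2)

theorem blockWord_succ_add_three (a h i : ℕ) : blockWord (a + 1) h (3 + i) = blockWord a h i := by
  simp only [blockWord, decide_eq_decide]
  omega

theorem isCut_blockWord_succ (a h : ℕ) : IsCut (blockWord (a + 1) h) 3 where
  two_lt := by omega
  pred := by simp [blockWord]
  self := by
    simp only [blockWord, decide_eq_false_iff_not]
    omega
  succ := by
    simp only [blockWord, decide_eq_false_iff_not]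
    omega
  add_two := by simp [blockWord]

theorem peakProb_blockWord (a h : ℕ) :
    peakProb (blockWord a h) (3 * a + 2 * h + 3) =
      (1 / 3) ^ a * peakProb (blockWord 0 h) (2 * h + 3) := by
  induction a with
  | zero => simp
  | succ a ih =>
    have h1 : blockWord (a + 1) h 1 = false := by simp [blockWord]
    have hcut := isCut_blockWord_succ a h
    calc peakProb (blockWord (a + 1) h) (3 * (a + 1) + 2 * h + 3)
        = peakProb (blockWord (a + 1) h) (3 + (3 * a + 2 * h + 3)) := by congr 1; ring
      _ = 1 / 3 * peakProb (blockWord a h) (3 * a + 2 * h + 3) := by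
        rw [hcut.peakProb_add (by omega) h1, peakProb_three h1 hcut.pred]
        simp only [blockWord_succ_add_three]
      _ = (1 / 3) ^ (a + 1) * peakProb (blockWord 0 h) (2 * h + 3) := by
        rw [ih, ← mul_assoc, pow_succ']

theorem peakProb_blockWord_zero_pos {h : ℕ} (hh : 0 < h) :
    0 < peakProb (blockWord 0 h) (2 * h + 3) :=
  peakProb_pos (by simp [blockWord]) (fun i => by
    simp only [blockWord, decide_eq_true_eq, decide_eq_false_iff_not]
    omega) _

theorem peakProb_blockWord_zero_le (h : ℕ) :
    peakProb (blockWord 0 h) (2 * h + 3) ≤ 2 / (h + 1).factorial :=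
  peakProb_le_two_div_factorial (s := 1) (by omega) fun i hi hih => by
    simp only [blockWord, decide_eq_false_iff_not]
    omega

/-- The periodic repetition of `blockWord a h`. Index `0` stands for the last letter of a period,
since words are indexed from `1`. -/
def periodicBlockWord (a h i : ℕ) : Bool :=
  blockWord a h (i % (3 * a + 2 * h + 3))

theorem periodicBlockWord_periodic (a h : ℕ) :
    Function.Periodic (periodicBlockWord a h) (3 * a + 2 * h + 3) := fun i => by
  simp [periodicBlockWord]

theorem periodicBlockWord_of_lt {a h i : ℕ} (hi : i < 3 * a + 2 * h + 3) :
    periodicBlockWord a h i = blockWord a h i := by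
  rw [periodicBlockWord, Nat.mod_eq_of_lt hi]

theorem isCut_periodicBlockWord (a h : ℕ) :
    IsCut (periodicBlockWord a h) (3 * a + 2 * h + 3) where
  two_lt := by omega
  pred := by simp [periodicBlockWord_of_lt, blockWord]
  self := by simp [periodicBlockWord, blockWord]
  succ := by
    rw [add_comm, periodicBlockWord_periodic, periodicBlockWord_of_lt (by omega)]
    simp [blockWord]
  add_two := by
    rw [add_comm, periodicBlockWord_periodic, periodicBlockWord_of_lt (by omega)]
    simp [blockWord]

theorem periodicBlockWord_succ_eq_false {a h i : ℕ} (hh : 0 < h)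
    (hi : periodicBlockWord a h i = true) : periodicBlockWord a h (i + 1) = false := by
  have hlt := Nat.mod_lt i (show 3 * a + 2 * h + 3 > 0 by omega)
  rw [periodicBlockWord] at hi ⊢
  rw [Nat.add_mod_eq_ite, Nat.mod_eq_of_lt (show 1 < 3 * a + 2 * h + 3 by omega)]
  simp only [blockWord, decide_eq_true_eq, decide_eq_false_iff_not] at hi ⊢
  split_ifs <;> omega

/-- The real numbers that occur as `lim (p_n(w) / n!) ^ (1 / n)` for a periodic word `w`;
periodicity is imposed on the irrelevant letter `w 0` as well. -/
def peakGrowthRates : Set ℝ :=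
  {P | ∃ (w : ℕ → Bool) (q : ℕ), 0 < q ∧ Function.Periodic w q ∧
    Tendsto (fun n : ℕ => peakProb w n ^ (1 / (n : ℝ))) atTop (nhds P)}

theorem blockWord_rate_mem_peakGrowthRates (a : ℕ) {h : ℕ} (hh : 0 < h) :
    ((1 / 3) ^ a * peakProb (blockWord 0 h) (2 * h + 3)) ^
      (1 / ((3 * a + 2 * h + 3 : ℕ) : ℝ)) ∈ peakGrowthRates := by
  refine ⟨periodicBlockWord a h, 3 * a + 2 * h + 3, by omega, periodicBlockWord_periodic a h, ?_⟩
  rw [← peakProb_blockWord, ← peakProb_congr fun i _ hi => periodicBlockWord_of_lt hi]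
  exact tendsto_peakProb_rpow_of_periodic (periodicBlockWord_periodic a h)
    (isCut_periodicBlockWord a h) fun _ => periodicBlockWord_succ_eq_false hh

theorem exp_neg_mediant_mem_peakGrowthRates (a : ℕ) {h : ℕ} (hh : 0 < h) :
    Real.exp (-((-Real.log (peakProb (blockWord 0 h) (2 * h + 3)) + a * Real.log 3) /
      (((2 * h + 3 : ℕ) : ℝ) + a * 3))) ∈ peakGrowthRates := by
  have hpos := peakProb_blockWord_zero_pos hh
  convert blockWord_rate_mem_peakGrowthRates a hh using 1
  rw [Real.rpow_def_of_pos (by positivity), Real.log_mul (by positivity) hpos.ne', Real.log_pow,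
    one_div 3, Real.log_inv]
  congr 1
  push_cast
  field_simp
  ring

theorem Ioo_subset_closure_peakGrowthRates :
    Set.Ioo (0 : ℝ) (3 ^ (-(1 : ℝ) / 3)) ⊆ closure peakGrowthRates := by
  rintro L ⟨hL0, hL1⟩
  set l : ℝ := -Real.log L with hl
  have hlog : Real.log 3 < l * 3 := by
    have := Real.log_lt_log hL0 hL1
    rw [Real.log_rpow (by norm_num)] at this
    linarith
  have hmediant : ∀ᶠ h : ℕ in atTop, ∃ a : ℕ,
      |(-Real.log (peakProb (blockWord 0 h) (2 * h + 3)) + a * Real.log 3) /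
        (((2 * h + 3 : ℕ) : ℝ) + a * 3) - l| ≤ (l * 3 - Real.log 3) / ((2 * h + 3 : ℕ) : ℝ) := by
    filter_upwards [eventually_two_div_factorial_le_pow hL0, eventually_gt_atTop 0] with h hle hh
    have hlog_le := Real.log_le_log (peakProb_blockWord_zero_pos hh)
      ((peakProb_blockWord_zero_le h).trans hle)
    rw [Real.log_pow] at hlog_le
    exact exists_nat_abs_mediant_sub_le (by positivity) (by norm_num) hlog (by linarith)
  obtain ⟨a, ha⟩ := hmediant.choice
  have herr : Tendsto (fun h : ℕ => (l * 3 - Real.log 3) / ((2 * h + 3 : ℕ) : ℝ)) atTop (nhds 0) :=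
    (tendsto_const_nhds.div_atTop tendsto_natCast_atTop_atTop).comp
      (tendsto_atTop_mono (fun h => by omega : ∀ h : ℕ, h ≤ 2 * h + 3) tendsto_id)
  have hlim := ((tendsto_iff_norm_sub_tendsto_zero.2
    (squeeze_zero' (.of_forall fun _ => norm_nonneg _) ha herr)).neg).rexp
  rw [hl, neg_neg, Real.exp_log hL0] at hlim
  refine mem_closure_of_tendsto hlim ?_
  filter_upwards [eventually_gt_atTop 0] with h hh
  exact exp_neg_mediant_mem_peakGrowthRates (a h) hh

theorem stmt2 (L : ℝ) (hL0 : 0 ≤ L) (hL1 : L ≤ (3 : ℝ) ^ (-(1 : ℝ) / 3)) (ε : ℝ)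
    (hε : 0 < ε) :
    ∃ (w : ℕ → Bool) (q : ℕ), 0 < q ∧ (∀ i : ℕ, 1 ≤ i → w (i + q) = w i) ∧
      ∃ P : ℝ,
        Tendsto (fun n : ℕ => ((pCount w n : ℝ) / (Nat.factorial n : ℝ)) ^ (1 / (n : ℝ)))
          atTop (nhds P) ∧ |P - L| < ε := by
  have hdense : Set.Icc (0 : ℝ) (3 ^ (-(1 : ℝ) / 3)) ⊆ closure peakGrowthRates := by
    rw [← closure_Ioo (by positivity)]
    exact closure_minimal Ioo_subset_closure_peakGrowthRates isClosed_closure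
  obtain ⟨P, ⟨w, q, hq, hper, hlim⟩, hdist⟩ := Metric.mem_closure_iff.1 (hdense ⟨hL0, hL1⟩) ε hε
  rw [dist_comm, Real.dist_eq] at hdist
  exact ⟨w, q, hq, fun i _ => hper i, P, hlim, hdist⟩
end
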